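/- For every d ≥ 3, the number of minimal permutations with d descents of length d+3 satisfies p_{d+3,d} = 3^{d+3} − (d² + 4d + 7)·2^{d+2} + (1/2)d⁴ + (5/2)d³ + 5d² + 6d + 1. -/

import Mathlib

/-- The number of descents of a word (list of naturals), i.e. the number of
positions `i` (0-indexed) with `l[i] > l[i+1]`. -/
def descents (l : List ℕ) : ℕ :=
  ((List.range (l.length - 1)).filter (fun i => l.getD (i + 1) 0 < l.getD i 0)).length

/-- `l` is a minimal permutation (word) with `d` descents: it has exactly `d`
descents and deleting any one entry yields a word with `d - 1` descents. -/
def IsMinimal (d : ℕ) (l : List ℕ) : Prop :=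
  descents l = d ∧ ∀ i < l.length, descents (l.eraseIdx i) = d - 1

/-- Transition on an `A` letter. -/
def da : Fin 6 → Fin 6 := ![1, 2, 2, 4, 4, 5]

/-- Transition on a `B` letter. -/
def db : Fin 6 → Fin 6 := ![0, 3, 4, 3, 5, 5]

/-- Number of accepted words of length `n` from a state. -/
def Gc : ℕ → Fin 6 → Fin 6 → ℕ
  | 0, s, t => if s = 5 ∧ t = 5 then 1 else 0
  | n + 1, s, t => Gc n (da s) t + Gc n (db s) (da t) + Gc n s (db t)

theorem Gc_succ (n : ℕ) (s t : Fin 6) :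
    (Gc (n + 1) s t : ℚ) = Gc n (da s) t + Gc n (db s) (da t) + Gc n s (db t) := by
  simp [Gc]

theorem Gc_closed (n : ℕ) (x : ℚ) (hx : x = n + 3) :
    (Gc (n + 3) 5 5 : ℚ) = 3 ^ (n + 3) ∧
    (Gc (n + 3) 5 4 : ℚ) = 3 ^ (n + 3) + (-1) * 2 ^ (n + 3) ∧
    (Gc (n + 3) 5 2 : ℚ) = 3 ^ (n + 3) + (-1) * 2 ^ (n + 3) + (-1/2) * 2 ^ (n + 3) * x ^ 1 ∧
    (Gc (n + 3) 4 5 : ℚ) = 3 ^ (n + 3) + (-1) * 2 ^ (n + 3) ∧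
    (Gc (n + 3) 4 4 : ℚ) = 3 ^ (n + 3) + (-2) * 2 ^ (n + 3) + 1 ∧
    (Gc (n + 3) 4 3 : ℚ) = 3 ^ (n + 3) + (-1) * 2 ^ (n + 3) + (-1/2) * 2 ^ (n + 3) * x ^ 1 ∧
    (Gc (n + 3) 4 2 : ℚ) = 3 ^ (n + 3) + (-2) * 2 ^ (n + 3) + (-1/2) * 2 ^ (n + 3) * x ^ 1 + 1 + x ^ 1 ∧
    (Gc (n + 3) 4 1 : ℚ) = 3 ^ (n + 3) + (-1) * 2 ^ (n + 3) * x ^ 1 + (-1) * 1 ∧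
    (Gc (n + 3) 3 5 : ℚ) = 3 ^ (n + 3) + (-1) * 2 ^ (n + 3) + (-1/2) * 2 ^ (n + 3) * x ^ 1 ∧
    (Gc (n + 3) 3 4 : ℚ) = 3 ^ (n + 3) + (-2) * 2 ^ (n + 3) + (-1/2) * 2 ^ (n + 3) * x ^ 1 + 1 + x ^ 1 ∧
    (Gc (n + 3) 3 3 : ℚ) = 3 ^ (n + 3) + (-1) * 2 ^ (n + 3) + (-1) * 2 ^ (n + 3) * x ^ 1 + (1/2) * x ^ 1 + (1/2) * x ^ 2 ∧
    (Gc (n + 3) 3 2 : ℚ) = 3 ^ (n + 3) + (-2) * 2 ^ (n + 3) + (-1) * 2 ^ (n + 3) * x ^ 1 + 1 + x ^ 1 + x ^ 2 ∧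
    (Gc (n + 3) 3 1 : ℚ) = 3 ^ (n + 3) + (-3/2) * 2 ^ (n + 3) * x ^ 1 + (-3/2) * x ^ 1 + (3/2) * x ^ 2 ∧
    (Gc (n + 3) 2 5 : ℚ) = 3 ^ (n + 3) + (-1) * 2 ^ (n + 3) + (-1/2) * 2 ^ (n + 3) * x ^ 1 ∧
    (Gc (n + 3) 2 4 : ℚ) = 3 ^ (n + 3) + (-2) * 2 ^ (n + 3) + (-1/2) * 2 ^ (n + 3) * x ^ 1 + 1 + x ^ 1 ∧
    (Gc (n + 3) 2 3 : ℚ) = 3 ^ (n + 3) + (-1) * 2 ^ (n + 3) * x ^ 1 + (-1) * 1 ∧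
    (Gc (n + 3) 2 2 : ℚ) = 3 ^ (n + 3) + (-2) * 2 ^ (n + 3) + (-1) * 2 ^ (n + 3) * x ^ 1 + 1 + x ^ 1 + x ^ 2 ∧
    (Gc (n + 3) 2 1 : ℚ) = 3 ^ (n + 3) + 2 ^ (n + 3) + (-3/2) * 2 ^ (n + 3) * x ^ 1 + (-2) * 1 + (-1/2) * x ^ 1 + (1/2) * x ^ 2 ∧
    (Gc (n + 3) 2 0 : ℚ) = 3 ^ (n + 3) + (-2) * 2 ^ (n + 3) + (1/4) * 2 ^ (n + 3) * x ^ 1 + (-1/4) * 2 ^ (n + 3) * x ^ 2 + 1 ∧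
    (Gc (n + 3) 1 5 : ℚ) = 3 ^ (n + 3) + (-1) * 2 ^ (n + 3) * x ^ 1 + (-1) * 1 ∧
    (Gc (n + 3) 1 4 : ℚ) = 3 ^ (n + 3) + (-1) * 2 ^ (n + 3) + (-1) * 2 ^ (n + 3) * x ^ 1 + (-1) * 1 + (2) * x ^ 1 ∧
    (Gc (n + 3) 1 3 : ℚ) = 3 ^ (n + 3) + 2 ^ (n + 3) + (-3/2) * 2 ^ (n + 3) * x ^ 1 + (-2) * 1 + (-1/2) * x ^ 1 + (1/2) * x ^ 2 ∧
    (Gc (n + 3) 1 2 : ℚ) = 3 ^ (n + 3) + (-1) * 2 ^ (n + 3) + (-3/2) * 2 ^ (n + 3) * x ^ 1 + (-1) * 1 + (2) * x ^ 2 ∧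
    (Gc (n + 3) 1 1 : ℚ) = 3 ^ (n + 3) + (2) * 2 ^ (n + 3) + (-2) * 2 ^ (n + 3) * x ^ 1 + (-1) * 1 + (-4) * x ^ 1 + (2) * x ^ 2 ∧
    (Gc (n + 3) 1 0 : ℚ) = 3 ^ (n + 3) + (-1) * 2 ^ (n + 3) + (-1/4) * 2 ^ (n + 3) * x ^ 1 + (-1/4) * 2 ^ (n + 3) * x ^ 2 + (-1) * 1 + (2) * x ^ 1 + (-3/2) * x ^ 2 + (1/2) * x ^ 3 ∧
    (Gc (n + 3) 0 5 : ℚ) = 3 ^ (n + 3) + (-2) * 2 ^ (n + 3) + (1/4) * 2 ^ (n + 3) * x ^ 1 + (-1/4) * 2 ^ (n + 3) * x ^ 2 + 1 ∧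
    (Gc (n + 3) 0 4 : ℚ) = 3 ^ (n + 3) + (-3) * 2 ^ (n + 3) + (1/4) * 2 ^ (n + 3) * x ^ 1 + (-1/4) * 2 ^ (n + 3) * x ^ 2 + (3) * 1 + (-1) * x ^ 1 + x ^ 2 ∧
    (Gc (n + 3) 0 3 : ℚ) = 3 ^ (n + 3) + (-1) * 2 ^ (n + 3) + (-1/4) * 2 ^ (n + 3) * x ^ 1 + (-1/4) * 2 ^ (n + 3) * x ^ 2 + (-1) * 1 + (2) * x ^ 1 + (-3/2) * x ^ 2 + (1/2) * x ^ 3 ∧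
    (Gc (n + 3) 0 2 : ℚ) = 3 ^ (n + 3) + (-3) * 2 ^ (n + 3) + (-1/4) * 2 ^ (n + 3) * x ^ 1 + (-1/4) * 2 ^ (n + 3) * x ^ 2 + (3) * 1 + (3) * x ^ 1 + (-2) * x ^ 2 + x ^ 3 ∧
    (Gc (n + 3) 0 1 : ℚ) = 3 ^ (n + 3) + (-3/4) * 2 ^ (n + 3) * x ^ 1 + (-1/4) * 2 ^ (n + 3) * x ^ 2 + (-3) * 1 + (17/2) * x ^ 1 + (-6) * x ^ 2 + (3/2) * x ^ 3 ∧
    (Gc (n + 3) 0 0 : ℚ) = 3 ^ (n + 3) + (-2) * 2 ^ (n + 3) + 2 ^ (n + 3) * x ^ 1 + (-1/2) * 2 ^ (n + 3) * x ^ 2 + 1 + (-21/2) * x ^ 1 + (19/2) * x ^ 2 + (-7/2) * x ^ 3 + (1/2) * x ^ 4 := by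
  induction n generalizing x with
  | zero =>
    subst hx
    have h55 : Gc (0 + 3) 5 5 = 27 := rfl
    have h54 : Gc (0 + 3) 5 4 = 19 := rfl
    have h52 : Gc (0 + 3) 5 2 = 7 := rfl
    have h45 : Gc (0 + 3) 4 5 = 19 := rfl
    have h44 : Gc (0 + 3) 4 4 = 12 := rfl
    have h43 : Gc (0 + 3) 4 3 = 7 := rfl
    have h42 : Gc (0 + 3) 4 2 = 3 := rfl
    have h41 : Gc (0 + 3) 4 1 = 2 := rfl
    have h35 : Gc (0 + 3) 3 5 = 7 := rfl
    have h34 : Gc (0 + 3) 3 4 = 3 := rfl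
    have h33 : Gc (0 + 3) 3 3 = 1 := rfl
    have h32 : Gc (0 + 3) 3 2 = 0 := rfl
    have h31 : Gc (0 + 3) 3 1 = 0 := rfl
    have h25 : Gc (0 + 3) 2 5 = 7 := rfl
    have h24 : Gc (0 + 3) 2 4 = 3 := rfl
    have h23 : Gc (0 + 3) 2 3 = 2 := rfl
    have h22 : Gc (0 + 3) 2 2 = 0 := rfl
    have h21 : Gc (0 + 3) 2 1 = 0 := rfl
    have h20 : Gc (0 + 3) 2 0 = 0 := rfl
    have h15 : Gc (0 + 3) 1 5 = 2 := rfl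
    have h14 : Gc (0 + 3) 1 4 = 0 := rfl
    have h13 : Gc (0 + 3) 1 3 = 0 := rfl
    have h12 : Gc (0 + 3) 1 2 = 0 := rfl
    have h11 : Gc (0 + 3) 1 1 = 0 := rfl
    have h10 : Gc (0 + 3) 1 0 = 0 := rfl
    have h05 : Gc (0 + 3) 0 5 = 0 := rfl
    have h04 : Gc (0 + 3) 0 4 = 0 := rfl
    have h03 : Gc (0 + 3) 0 3 = 0 := rfl
    have h02 : Gc (0 + 3) 0 2 = 0 := rfl
    have h01 : Gc (0 + 3) 0 1 = 0 := rfl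
    have h00 : Gc (0 + 3) 0 0 = 0 := rfl
    refine ⟨?_, ?_, ?_, ?_, ?_, ?_, ?_, ?_, ?_, ?_, ?_, ?_, ?_, ?_, ?_, ?_, ?_, ?_, ?_, ?_, ?_, ?_, ?_, ?_, ?_, ?_, ?_, ?_, ?_, ?_, ?_⟩ <;>
      (simp only [h55, h54, h52, h45, h44, h43, h42, h41, h35, h34, h33, h32, h31, h25, h24, h23, h22, h21, h20, h15, h14, h13, h12, h11, h10, h05, h04, h03, h02, h01, h00]; norm_num)
  | succ n ih =>
    obtain ⟨h55, h54, h52, h45, h44, h43, h42, h41, h35, h34, h33, h32, h31, h25, h24, h23, h22, h21, h20, h15, h14, h13, h12, h11, h10, h05, h04, h03, h02, h01, h00⟩ := ih (n + 3) rfl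
    have a0 : da 0 = 1 := rfl
    have b0 : db 0 = 0 := rfl
    have a1 : da 1 = 2 := rfl
    have b1 : db 1 = 3 := rfl
    have a2 : da 2 = 2 := rfl
    have b2 : db 2 = 4 := rfl
    have a3 : da 3 = 4 := rfl
    have b3 : db 3 = 3 := rfl
    have a4 : da 4 = 4 := rfl
    have b4 : db 4 = 5 := rfl
    have a5 : da 5 = 5 := rfl
    have b5 : db 5 = 5 := rfl
    subst hx
    push_cast
    refine ⟨?_, ?_, ?_, ?_, ?_, ?_, ?_, ?_, ?_, ?_, ?_, ?_, ?_, ?_, ?_, ?_, ?_, ?_, ?_, ?_, ?_, ?_, ?_, ?_, ?_, ?_, ?_, ?_, ?_, ?_, ?_⟩ <;>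
      (rw [show n + 1 + 3 = (n + 3) + 1 from rfl, Gc_succ]
       simp only [a0, b0, a1, b1, a2, b2, a3, b3, a4, b4, a5, b5, h55, h54, h52, h45, h44, h43, h42, h41, h35, h34, h33, h32, h31, h25, h24, h23, h22, h21, h20, h15, h14, h13, h12, h11, h10, h05, h04, h03, h02, h01, h00]
       ring)

/-- Comparison of optional values. -/
def olt : Option ℕ → Option ℕ → Bool
  | some a, some b => decide (a < b)
  | _, _ => false

/-- The boundary condition between two consecutive decreasing runs. -/
def okk (A B : List ℕ) : Bool :=
  olt A.getLast? B.tail.head? && olt A.dropLast.getLast? B.head?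

theorem descents_nil : descents [] = 0 := rfl
theorem descents_single (a : ℕ) : descents [a] = 0 := rfl

theorem descents_cons_cons (a b : ℕ) (l : List ℕ) :
    descents (a :: b :: l) = (if b < a then 1 else 0) + descents (b :: l) := by
  unfold descents
  simp only [List.length_cons, Nat.add_sub_cancel]
  rw [List.range_succ_eq_map, List.filter_cons, List.filter_map, ]
  by_cases h : b < a
  · simp [h, Function.comp_def]
    omega
  · simp [h, Function.comp_def]

theorem descents_append (A B : List ℕ) :
    descents (A ++ B) = descents A + (olt B.head? A.getLast?).toNat + descents B := by
  induction A with
  | nil => cases B <;> simp [olt, descents_nil]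
  | cons a A ih =>
    cases A with
    | nil =>
      cases B with
      | nil => simp [olt, descents_nil]
      | cons b B =>
        simp [olt, descents_cons_cons, descents_single]
        by_cases h : b < a <;> simp [h]
    | cons a' A =>
      simp only [List.cons_append] at ih ⊢
      rw [descents_cons_cons, ih, descents_cons_cons, List.getLast?_cons_cons]
      omega

theorem descents_le (l : List ℕ) : descents l ≤ l.length - 1 := by
  unfold descents
  exact (List.length_filter_le _ _).trans (by simp)

theorem descents_desc (l : List ℕ) (h : l.Pairwise (· > ·)) : descents l = l.length - 1 := by
  induction l with
  | nil => rfl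
  | cons a l ih =>
    cases l with
    | nil => rfl
    | cons b l =>
      rw [descents_cons_cons, ih h.of_cons]
      have : b < a := by
        have := List.rel_of_pairwise_cons h (a' := b) (by simp)
        simpa using this
      simp [this]; omega

theorem olt_asymm {o p : Option ℕ} (h : olt o p = true) : olt p o = false := by
  cases o <;> cases p <;> simp_all [olt]
  omega

theorem okk_v1 {A B : List ℕ} (hB : B.Pairwise (· > ·)) (h : okk A B = true) :
    olt A.getLast? B.head? = true := by
  unfold okk at h
  rcases B with _ | ⟨b, _ | ⟨b', B⟩⟩
  · simp [olt] at h
  · cases hh : A.getLast? <;> simp [hh, olt] at h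
  · cases hh : A.getLast? with
    | none => simp [hh, olt] at h
    | some a =>
      simp [hh, olt] at h ⊢
      have : b' < b := by
        have := List.rel_of_pairwise_cons hB (a' := b') (by simp)
        simpa using this
      omega

theorem okk_lenA {A B : List ℕ} (h : okk A B = true) : 2 ≤ A.length := by
  unfold okk at h
  rcases A with _ | ⟨b, _ | ⟨b', B⟩⟩
  · simp [olt] at h
  · simp [olt] at h
  · simp

theorem okk_lenB {A B : List ℕ} (h : okk A B = true) : 2 ≤ B.length := by
  unfold okk at h
  rcases B with _ | ⟨b, _ | ⟨b', B⟩⟩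
  · cases hh : A.getLast? <;> simp [hh, olt] at h
  · cases hh : A.getLast? <;> simp [hh, olt] at h
  · simp

theorem getLast_erase (A : List ℕ) (i : ℕ) :
    (A.eraseIdx i).getLast? = A.getLast? ∨ (A.eraseIdx i).getLast? = A.dropLast.getLast? := by
  by_cases h : i < A.length
  · by_cases h' : i + 1 = A.length
    · right
      have : i = A.length - 1 := by omega
      rw [this, List.eraseIdx_length_sub_one]
    · left
      rw [List.getLast?_eq_getElem?, List.getLast?_eq_getElem?, List.getElem?_eraseIdx,
        List.length_eraseIdx, if_pos h, if_neg (by omega)]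
      congr 1; omega
  · left
    rw [List.eraseIdx_of_length_le (by omega)]

theorem head_erase (A : List ℕ) (i : ℕ) :
    (A.eraseIdx i).head? = A.head? ∨ (A.eraseIdx i).head? = A.tail.head? := by
  cases A with
  | nil => simp
  | cons a A => cases i <;> simp

theorem length_erase (A : List ℕ) (i : ℕ) (h : i < A.length) :
    (A.eraseIdx i).length = A.length - 1 := by
  rw [List.length_eraseIdx, if_pos h]

theorem eraseA {A B : List ℕ} (hB : B.Pairwise (· > ·)) (h : okk A B = true) (i : ℕ) :
    olt (A.eraseIdx i).getLast? B.head? = true := by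
  rcases getLast_erase A i with e | e <;> rw [e]
  · exact okk_v1 hB h
  · simp only [okk, Bool.and_eq_true] at h; exact h.2

theorem eraseB {A B : List ℕ} (hB : B.Pairwise (· > ·)) (h : okk A B = true) (i : ℕ) :
    olt A.getLast? (B.eraseIdx i).head? = true := by
  rcases head_erase B i with e | e <;> rw [e]
  · exact okk_v1 hB h
  · simp only [okk, Bool.and_eq_true] at h; exact h.1

theorem head_app {A : List ℕ} (B : List ℕ) (h : A ≠ []) : (A ++ B).head? = A.head? := by
  cases A <;> simp_all

theorem desc3 {A B C : List ℕ} (hA : A.Pairwise (· > ·)) (hB : B.Pairwise (· > ·))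
    (hC : C.Pairwise (· > ·)) (hB0 : B ≠ []) (h1 : olt A.getLast? B.head? = true)
    (h2 : olt B.getLast? C.head? = true) :
    descents (A ++ (B ++ C)) = (A.length - 1) + ((B.length - 1) + (C.length - 1)) := by
  rw [descents_append, descents_append, head_app _ hB0, olt_asymm h1, olt_asymm h2,
    descents_desc A hA, descents_desc B hB, descents_desc C hC]
  simp

theorem minimal_of_runs {A B C : List ℕ} (hA : A.Pairwise (· > ·)) (hB : B.Pairwise (· > ·))
    (hC : C.Pairwise (· > ·)) (h1 : okk A B = true) (h2 : okk B C = true) (d : ℕ)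
    (hl : (A ++ (B ++ C)).length = d + 3) : IsMinimal d (A ++ (B ++ C)) := by
  have la := okk_lenA h1
  have lb := okk_lenB h1
  have lc := okk_lenB h2
  simp only [List.length_append] at hl
  have ne : ∀ {X : List ℕ}, 1 ≤ X.length → X ≠ [] := by
    rintro X h rfl; simp at h
  refine ⟨?_, ?_⟩
  · rw [desc3 hA hB hC (ne (by omega)) (okk_v1 hB h1) (okk_v1 hC h2)]
    omega
  · intro i hi
    simp only [List.length_append] at hi
    by_cases i1 : i < A.length
    · rw [List.eraseIdx_append_of_lt_length i1,
        desc3 (hA.sublist (List.eraseIdx_sublist _ _)) hB hC (ne (by omega)) (eraseA hB h1 i)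
          (okk_v1 hC h2), length_erase _ _ i1]
      omega
    · rw [List.eraseIdx_append_of_length_le (by omega)]
      by_cases i2 : i - A.length < B.length
      · rw [List.eraseIdx_append_of_lt_length i2,
          desc3 hA (hB.sublist (List.eraseIdx_sublist _ _)) hC
            (ne (by rw [length_erase _ _ i2]; omega)) (eraseB hB h1 _) (eraseA hC h2 _),
          length_erase _ _ i2]
        omega
      · rw [List.eraseIdx_append_of_length_le (by omega),
          desc3 hA hB (hC.sublist (List.eraseIdx_sublist _ _)) (ne (by omega)) (okk_v1 hB h1)
          (eraseB hC h2 _), length_erase _ _ (by omega)]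
        omega

theorem split_run (l : List ℕ) (h0 : l ≠ []) (hn : l.Nodup) :
    ∃ A X, l = A ++ X ∧ A ≠ [] ∧ A.Pairwise (· > ·) ∧
      (X ≠ [] → olt A.getLast? X.head? = true) := by
  induction l with
  | nil => exact absurd rfl h0
  | cons a l ih =>
    cases l with
    | nil => exact ⟨[a], [], by simp⟩
    | cons b l =>
      by_cases h : b < a
      · obtain ⟨A, X, e, hA0, hA, hX⟩ := ih (by simp) hn.of_cons
        rcases A with _ | ⟨c, A⟩
        · exact absurd rfl hA0
        · simp only [List.cons_append, List.cons.injEq] at e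
          obtain ⟨rfl, e⟩ := e
          refine ⟨a :: b :: A, X, by simp [e], by simp, ?_, ?_⟩
          · rw [List.pairwise_cons]
            refine ⟨?_, hA⟩
            intro y hy
            rcases List.mem_cons.1 hy with rfl | hy
            · exact h
            · have := List.rel_of_pairwise_cons hA hy
              omega
          · rwa [List.getLast?_cons_cons]
      · refine ⟨[a], b :: l, by simp, by simp, by simp, ?_⟩
        have : a ≠ b := by rintro rfl; simp at hn
        simp [olt]; omega

theorem desc2 {A X : List ℕ} (hA : A.Pairwise (· > ·)) (h : X ≠ [] → olt A.getLast? X.head? = true) :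
    descents (A ++ X) = (A.length - 1) + descents X := by
  rw [descents_append, descents_desc A hA]
  by_cases hX : X = []
  · subst hX; simp [olt]
  · rw [olt_asymm (h hX)]; simp

theorem olt_of {A B : List ℕ} {o p : Option ℕ} (hd : ∀ a ∈ A, ∀ b ∈ B, a ≠ b)
    (ho : ∃ a ∈ A, o = some a) (hp : ∃ b ∈ B, p = some b) (h : (olt p o).toNat = 0) :
    olt o p = true := by
  obtain ⟨a, ha, rfl⟩ := ho
  obtain ⟨b, hb, rfl⟩ := hp
  have := hd a ha b hb
  simp [olt] at h ⊢
  omega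

theorem ex_last {A : List ℕ} (h : A ≠ []) : ∃ a ∈ A, A.getLast? = some a :=
  ⟨A.getLast h, List.getLast_mem h, List.getLast?_eq_getLast_of_ne_nil h⟩

theorem ex_head {A : List ℕ} (h : A ≠ []) : ∃ a ∈ A, A.head? = some a :=
  ⟨A.head h, List.head_mem h, List.head?_eq_some_head h⟩

theorem runs_of_minimal (d : ℕ) (hd : 1 ≤ d) (l : List ℕ) (hn : l.Nodup) (hl : l.length = d + 3)
    (hm : IsMinimal d l) : ∃ A B C : List ℕ, l = A ++ (B ++ C) ∧ A.Pairwise (· > ·) ∧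
      B.Pairwise (· > ·) ∧ C.Pairwise (· > ·) ∧ okk A B = true ∧ okk B C = true := by
  have ne : ∀ {X : List ℕ}, 1 ≤ X.length → X ≠ [] := by
    rintro X h rfl; simp at h
  obtain ⟨A, X, rfl, hA0, hA, hAX⟩ := split_run l (ne (by omega)) hn
  obtain ⟨hm1, hm2⟩ := hm
  have pA := List.length_pos_iff.2 hA0
  have hX0 : X ≠ [] := by
    rintro rfl
    rw [desc2 hA hAX] at hm1
    simp [descents_nil] at hm1 hl
    omega
  obtain ⟨B, Y, rfl, hB0, hB, hBY⟩ := split_run X hX0 (List.nodup_append.1 hn).2.1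
  have pB := List.length_pos_iff.2 hB0
  have hY0 : Y ≠ [] := by
    rintro rfl
    rw [desc2 hA hAX, desc2 hB hBY] at hm1
    simp [descents_nil] at hm1 hl
    omega
  obtain ⟨C, Z, rfl, hC0, hC, hCZ⟩ := split_run Y hY0
    (List.nodup_append.1 (List.nodup_append.1 hn).2.1).2.1
  have pC := List.length_pos_iff.2 hC0
  have hZ0 : Z = [] := by
    by_contra hZ
    have pZ := List.length_pos_iff.2 hZ
    rw [desc2 hA hAX, desc2 hB hBY, desc2 hC hCZ] at hm1
    have := descents_le Z
    simp at hl
    omega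
  subst hZ0
  simp only [List.append_nil] at *
  clear hCZ hX0 hY0
  have hBC := hBY hC0
  have hAB := hAX (by simp [hB0])
  rw [head_app _ hB0] at hAB
  have dAB : ∀ a ∈ A, ∀ b ∈ B, a ≠ b := fun a ha b hb =>
    (List.nodup_append.1 hn).2.2 a ha b (by simp [hb])
  have dBC : ∀ a ∈ B, ∀ b ∈ C, a ≠ b := 
    (List.nodup_append.1 (List.nodup_append.1 hn).2.1).2.2
  simp only [List.length_append] at hl hm2
  have e1 := hm2 (A.length - 1) (by omega)
  rw [List.eraseIdx_append_of_lt_length (by omega), List.eraseIdx_length_sub_one,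
    descents_append, descents_append, head_app _ hB0,
    descents_desc _ (hA.sublist (List.dropLast_sublist _)), descents_desc B hB,
    descents_desc C hC, List.length_dropLast] at e1
  have e2 := hm2 A.length (by omega)
  rw [List.eraseIdx_append_of_length_le (by omega), Nat.sub_self,
    List.eraseIdx_append_of_lt_length (by omega), List.eraseIdx_zero,
    descents_append, descents_append, descents_desc A hA,
    descents_desc _ (hB.sublist (List.tail_sublist _)),
    descents_desc C hC, List.length_tail] at e2
  have e3 := hm2 (A.length + (B.length - 1)) (by omega)
  rw [List.eraseIdx_append_of_length_le (by omega), Nat.add_sub_cancel_left,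
    List.eraseIdx_append_of_lt_length (by omega), List.eraseIdx_length_sub_one,
    descents_append, descents_append, descents_desc A hA,
    descents_desc _ (hB.sublist (List.dropLast_sublist _)),
    descents_desc C hC, List.length_dropLast] at e3
  have e4 := hm2 (A.length + B.length) (by omega)
  rw [List.eraseIdx_append_of_length_le (by omega), Nat.add_sub_cancel_left,
    List.eraseIdx_append_of_length_le (by omega), Nat.sub_self, List.eraseIdx_zero,
    descents_append, descents_append, descents_desc A hA,
    descents_desc _ (hC.sublist (List.tail_sublist _)),
    descents_desc B hB, List.length_tail] at e4
  have lA : 2 ≤ A.length := by omega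
  have lB : 2 ≤ B.length := by omega
  have lC : 2 ≤ C.length := by omega
  have sA : A.dropLast ≠ [] := ne (by simp; omega)
  have sB : B.dropLast ≠ [] := ne (by simp; omega)
  have tB : B.tail ≠ [] := ne (by simp; omega)
  have tC : C.tail ≠ [] := ne (by simp; omega)
  rw [head_app _ tB] at e2
  refine ⟨A, B, C, rfl, hA, hB, hC, ?_, ?_⟩
  · simp only [okk, Bool.and_eq_true]
    refine ⟨olt_of dAB (ex_last hA0) ?_ (by omega), olt_of dAB ?_ (ex_head hB0) (by omega)⟩
    · obtain ⟨b, hb, e⟩ := ex_head tB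
      exact ⟨b, List.mem_of_mem_tail hb, e⟩
    · obtain ⟨b, hb, e⟩ := ex_last sA
      exact ⟨b, List.mem_of_mem_dropLast hb, e⟩
  · simp only [okk, Bool.and_eq_true]
    refine ⟨olt_of dBC (ex_last hB0) ?_ (by omega), olt_of dBC ?_ (ex_head hC0) (by omega)⟩
    · obtain ⟨b, hb, e⟩ := ex_head tC
      exact ⟨b, List.mem_of_mem_tail hb, e⟩
    · obtain ⟨b, hb, e⟩ := ex_last sB
      exact ⟨b, List.mem_of_mem_dropLast hb, e⟩

/-- Transition function of the product automaton. -/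
def stp (x : Fin 3) (p : Fin 6 × Fin 6) : Fin 6 × Fin 6 :=
  if x = 0 then (da p.1, p.2) else if x = 1 then (db p.1, da p.2) else (p.1, db p.2)

/-- All words of length `n` over a three letter alphabet. -/
def wds : ℕ → List (List (Fin 3))
  | 0 => [[]]
  | n + 1 => (wds n).map (fun w => w ++ [0]) ++ ((wds n).map (fun w => w ++ [1]) ++
      (wds n).map (fun w => w ++ [2]))

theorem count_wds (n : ℕ) (s t : Fin 6) :
    (wds n).countP (fun w => decide (w.foldr stp (s, t) = (5, 5))) = Gc n s t := by
  induction n generalizing s t with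
  | zero => simp [wds, Gc, List.countP_cons]
  | succ n ih =>
    simp only [wds, Gc, List.countP_append, List.countP_map, Function.comp_def, List.foldr_append,
      List.foldr_cons, List.foldr_nil]
    rw [← ih, ← ih, ← ih]
    simp [stp, add_assoc]

theorem mem_wds (n : ℕ) (w : List (Fin 3)) : w ∈ wds n ↔ w.length = n := by
  induction n generalizing w with
  | zero => simp [wds]
  | succ n ih =>
    simp only [wds, List.mem_append, List.mem_map, ih]
    constructor
    · rintro (⟨v, hv, rfl⟩ | ⟨v, hv, rfl⟩ | ⟨v, hv, rfl⟩) <;> simp [hv]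
    · intro h
      rcases List.eq_nil_or_concat w with rfl | ⟨v, x, rfl⟩
      · simp at h
      · have hv : v.length = n := by simpa using h
        fin_cases x
        · left; exact ⟨v, hv, by simp⟩
        · right; left; exact ⟨v, hv, by simp⟩
        · right; right; exact ⟨v, hv, by simp⟩

theorem nodup_wds (n : ℕ) : (wds n).Nodup := by
  induction n with
  | zero => simp [wds]
  | succ n ih =>
    have inj : ∀ x : Fin 3, Function.Injective (fun w : List (Fin 3) => w ++ [x]) :=
      fun x a b h => by simpa using h
    simp only [wds]
    rw [List.nodup_append, List.nodup_append]
    refine ⟨ih.map (inj 0), ⟨ih.map (inj 1), ih.map (inj 2), ?_⟩, ?_⟩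
    · intro a ha b hb
      simp only [List.mem_map] at ha hb
      obtain ⟨v, -, rfl⟩ := ha
      obtain ⟨u, -, rfl⟩ := hb
      intro h
      have := (List.append_inj' h rfl).2
      simp at this
    · intro a ha b hb
      simp only [List.mem_map, List.mem_append] at ha hb
      obtain ⟨v, -, rfl⟩ := ha
      rcases hb with ⟨u, -, rfl⟩ | ⟨u, -, rfl⟩ <;> intro h <;>
      · have := (List.append_inj' h rfl).2
        simp at this

/-- Positions carrying a given letter, in decreasing order (the last letter has position 0). -/
def cls (x : Fin 3) : List (Fin 3) → List ℕ
  | [] => []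
  | y :: w => if y = x then w.length :: cls x w else cls x w

/-- The permutation attached to a word. -/
def toL (w : List (Fin 3)) : List ℕ := cls 0 w ++ (cls 1 w ++ cls 2 w)

theorem cls_lt (x : Fin 3) (w : List (Fin 3)) : ∀ k ∈ cls x w, k < w.length := by
  induction w with
  | nil => simp [cls]
  | cons y w ih =>
    intro k hk
    simp only [cls] at hk
    simp only [List.length_cons]
    split_ifs at hk
    · rcases List.mem_cons.1 hk with rfl | hk
      · omega
      · have := ih k hk; omega
    · have := ih k hk; omega

theorem cls_desc (x : Fin 3) (w : List (Fin 3)) : (cls x w).Pairwise (· > ·) := by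
  induction w with
  | nil => simp [cls]
  | cons y w ih =>
    simp only [cls]
    split_ifs
    · rw [List.pairwise_cons]
      exact ⟨fun k hk => cls_lt x w k hk, ih⟩
    · exact ih

theorem toL_perm (w : List (Fin 3)) : (toL w).Perm (List.range w.length) := by
  induction w with
  | nil => simp [toL, cls]
  | cons y w ih =>
    rw [List.length_cons, List.range_succ]
    have h2 : (w.length :: toL w).Perm (List.range w.length ++ [w.length]) :=
      (ih.cons _).trans (List.perm_append_singleton _ _).symm
    refine List.Perm.trans ?_ h2
    fin_cases y
    · simp [toL, cls]
    · simp only [toL, cls]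
      simp
    · simp only [toL, cls]
      simp only [Fin.reduceFinMk, Fin.reduceEq, if_false, if_true]
      rw [← List.append_assoc, ← List.append_assoc]
      exact List.perm_middle

theorem cls_inj (w w' : List (Fin 3)) (hl : w.length = w'.length)
    (h : ∀ x, cls x w = cls x w') : w = w' := by
  induction w generalizing w' with
  | nil => cases w' <;> simp_all
  | cons y w ih =>
    rcases w' with _ | ⟨z, w'⟩
    · simp at hl
    · have hl' : w.length = w'.length := by simpa using hl
      have hyz : y = z := by
        by_contra hne
        have h1 := h y
        simp only [cls, if_true, if_neg (Ne.symm hne)] at h1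
        have := cls_lt y w' w.length (by rw [← h1]; simp)
        omega
      subst hyz
      rw [ih w' hl']
      intro x
      have h1 := h x
      simp only [cls] at h1
      split_ifs at h1
      · exact (List.cons.inj h1).2
      · exact h1

theorem split_unique {A A' X X' : List ℕ} (h : A ++ X = A' ++ X') (hA : A ≠ []) 
    (hA' : A' ≠ []) (sA : A.Pairwise (· > ·)) (sA' : A'.Pairwise (· > ·))
    (h1 : olt A.getLast? X.head? = true) (h2 : olt A'.getLast? X'.head? = true) :
    A = A' ∧ X = X' := by
  have key : ∀ {A A' X X' t : List ℕ}, A ≠ [] → A'.Pairwise (· > ·) →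
      olt A.getLast? X.head? = true → A' = A ++ t → X = t ++ X' → t = [] := by
    intro A A' X X' t hA sA' h1 e1 e2
    subst e1 e2
    rcases t with _ | ⟨c, t⟩
    · rfl
    · exfalso
      obtain ⟨a, ha, e⟩ := ex_last hA
      rw [e] at h1
      simp [olt] at h1
      have := (List.pairwise_append.1 sA').2.2 a ha c (by simp)
      omega
  rcases List.append_eq_append_iff.1 h with ⟨t, e1, e2⟩ | ⟨t, e1, e2⟩
  · have := key hA sA' h1 e1 e2
    subst this
    simp_all
  · have := key hA' sA h2 e1 e2
    subst this
    simp_all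

theorem toL_inj (w w' : List (Fin 3)) (hl : w.length = w'.length)
    (h1 : okk (cls 0 w) (cls 1 w) = true) (h2 : okk (cls 1 w) (cls 2 w) = true)
    (h1' : okk (cls 0 w') (cls 1 w') = true) (h2' : okk (cls 1 w') (cls 2 w') = true)
    (h : toL w = toL w') : w = w' := by
  have ne : ∀ {X : List ℕ}, 2 ≤ X.length → X ≠ [] := by
    rintro X h rfl; simp at h
  have a := split_unique h (ne (okk_lenA h1)) (ne (okk_lenA h1')) (cls_desc _ _) (cls_desc _ _)
    (by rw [head_app _ (ne (okk_lenB h1))]; exact okk_v1 (cls_desc _ _) h1)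
    (by rw [head_app _ (ne (okk_lenB h1'))]; exact okk_v1 (cls_desc _ _) h1')
  have b := split_unique a.2 (ne (okk_lenA h2)) (ne (okk_lenA h2')) (cls_desc _ _) (cls_desc _ _)
    (okk_v1 (cls_desc _ _) h2) (okk_v1 (cls_desc _ _) h2')
  refine cls_inj w w' hl ?_
  intro x
  fin_cases x
  · exact a.1
  · exact b.1
  · exact b.2

theorem cls_map (f : ℕ → Fin 3) (x : Fin 3) (n : ℕ) :
    cls x ((List.range n).reverse.map f) = (List.range n).reverse.filter (fun k => f k = x) := by
  induction n with
  | zero => simp [cls]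
  | succ n ih =>
    rw [List.range_succ, List.reverse_append]
    simp only [List.reverse_singleton, List.singleton_append, List.map_cons, cls, ih,
      List.filter_cons, List.length_map, List.length_reverse, List.length_range,
      decide_eq_true_eq]

theorem desc_ext {A B : List ℕ} (hA : A.Pairwise (· > ·)) (hB : B.Pairwise (· > ·))
    (h : ∀ k, k ∈ A ↔ k ∈ B) : A = B := by
  have nA : A.Nodup := hA.imp (fun h => by omega)
  have nB : B.Nodup := hB.imp (fun h => by omega)
  have hp : A.Perm B := (List.perm_ext_iff_of_nodup nA nB).2 h
  exact hp.eq_of_pairwise (fun a b _ _ h1 h2 => by omega) hA hB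

theorem exists_word (n : ℕ) (A B C : List ℕ) (hA : A.Pairwise (· > ·)) (hB : B.Pairwise (· > ·))
    (hC : C.Pairwise (· > ·)) (hp : (A ++ (B ++ C)).Perm (List.range n)) :
    ∃ w : List (Fin 3), w.length = n ∧ cls 0 w = A ∧ cls 1 w = B ∧ cls 2 w = C := by
  classical
  let f : ℕ → Fin 3 := fun k => if k ∈ A then 0 else if k ∈ B then 1 else 2
  have hn : (A ++ (B ++ C)).Nodup := hp.nodup_iff.2 List.nodup_range
  have dA := (List.nodup_append.1 hn).2.2
  have dB := (List.nodup_append.1 (List.nodup_append.1 hn).2.1).2.2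
  have hm : ∀ k, (k ∈ A ∨ k ∈ B ∨ k ∈ C) ↔ k < n := fun k => by
    have := hp.mem_iff (a := k)
    simpa using this
  refine ⟨(List.range n).reverse.map f, by simp, ?_, ?_, ?_⟩
  · refine desc_ext (cls_desc _ _) hA ?_
    intro k
    rw [cls_map]
    simp only [List.mem_filter, List.mem_reverse, List.mem_range, decide_eq_true_eq, ← hm, f]
    by_cases h1 : k ∈ A <;> by_cases h2 : k ∈ B <;> simp [h1, h2]
  · refine desc_ext (cls_desc _ _) hB ?_
    intro k
    rw [cls_map]
    simp only [List.mem_filter, List.mem_reverse, List.mem_range, decide_eq_true_eq, ← hm, f]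
    by_cases h1 : k ∈ A <;> by_cases h2 : k ∈ B <;> simp [h1, h2]
    exact dA k h1 k (by simp [h2]) rfl
  · refine desc_ext (cls_desc _ _) hC ?_
    intro k
    rw [cls_map]
    simp only [List.mem_filter, List.mem_reverse, List.mem_range, decide_eq_true_eq, ← hm, f]
    by_cases h1 : k ∈ A <;> by_cases h2 : k ∈ B <;> simp [h1, h2]
    · exact fun h => dA k h1 k (by simp [h2]) rfl
    · exact fun h => dA k h1 k (by simp [h]) rfl
    · exact fun h => dB k h2 k h rfl

/-- Automaton state from the five Boolean characteristics. -/
def sgb (u1 u2 v1 v2 v3 : Bool) : Fin 6 :=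
  if v2 && v3 then 5 else if u1 then
    (if u2 then (if v1 then 4 else 2) else (if v1 then 3 else 1)) else 0

/-- Automaton state of a pair of runs. -/
def sg (A B : List ℕ) : Fin 6 :=
  sgb (!A.isEmpty) (!A.dropLast.isEmpty) (olt A.getLast? B.head?) (olt A.getLast? B.tail.head?)
    (olt A.dropLast.getLast? B.head?)

theorem sg_five (A B : List ℕ) : sg A B = 5 ↔ okk A B = true := by
  unfold sg okk
  generalize (!A.isEmpty) = u1
  generalize (!A.dropLast.isEmpty) = u2
  generalize olt A.getLast? B.head? = v1
  generalize olt A.getLast? B.tail.head? = v2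
  generalize olt A.dropLast.getLast? B.head? = v3
  revert u1 u2 v1 v2 v3
  decide

theorem olt_none (o : Option ℕ) : olt none o = false := by cases o <;> rfl

theorem olt_none' (o : Option ℕ) : olt o none = false := by cases o <;> rfl

theorem v12 {A B : List ℕ} (hB : B.Pairwise (· > ·)) (h : olt A.getLast? B.tail.head? = true) :
    olt A.getLast? B.head? = true := by
  rcases B with _ | ⟨b, _ | ⟨b', B⟩⟩
  · simp [olt_none'] at h
  · simp [olt_none'] at h
  · cases hh : A.getLast? with
    | none => simp [hh, olt] at h
    | some a =>
      simp [hh, olt] at h ⊢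
      have : b' < b := by
        have := List.rel_of_pairwise_cons hB (a' := b') (by simp)
        simpa using this
      omega

theorem olt_big {n : ℕ} {B : List ℕ} (h : ∀ b ∈ B, b < n) : olt (some n) B.head? = false := by
  cases B with
  | nil => rfl
  | cons b B =>
    have := h b (by simp)
    simp [olt]; omega

theorem sg_consA (n : ℕ) (A B : List ℕ) (hB : B.Pairwise (· > ·)) (h : ∀ b ∈ B, b < n) :
    sg (n :: A) B = da (sg A B) := by
  have ht : ∀ b ∈ B.tail, b < n := fun b hb => h b (List.mem_of_mem_tail hb)
  have h1 := olt_big h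
  have h2 := olt_big ht
  have h12 := v12 (A := A) hB
  rcases A with _ | ⟨a, _ | ⟨a', A⟩⟩
  · simp only [sg, List.getLast?_nil, List.dropLast, List.isEmpty, List.getLast?_singleton,
      olt_none, h1, h2]
    decide
  · simp only [sg, List.getLast?_cons_cons, List.dropLast, List.isEmpty, List.getLast?_nil,
      List.getLast?_singleton, olt_none, h1] at h12 ⊢
    revert h12
    generalize olt (some a) B.head? = v1
    generalize olt (some a) B.tail.head? = v2
    revert v1 v2
    decide
  · simp only [sg, List.getLast?_cons_cons, List.dropLast, List.isEmpty] at h12 ⊢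
    revert h12
    generalize olt (List.getLast? (a' :: A)) B.head? = v1
    generalize olt (List.getLast? (a' :: A)) B.tail.head? = v2
    generalize olt (List.getLast? (a :: List.dropLast (a' :: A))) B.head? = v3
    revert v1 v2 v3
    decide

theorem olt_big' {n : ℕ} {A : List ℕ} (h : ∀ b ∈ A, b < n) :
    olt A.getLast? (some n) = !A.isEmpty := by
  by_cases hA : A = []
  · subst hA; rfl
  · obtain ⟨a, ha, e⟩ := ex_last hA
    have := h a ha
    rw [e]
    simp [olt, this, hA]

theorem sg_consB (n : ℕ) (A B : List ℕ) (hB : B.Pairwise (· > ·)) (h : ∀ b ∈ A, b < n) :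
    sg A (n :: B) = db (sg A B) := by
  have ht : ∀ b ∈ A.dropLast, b < n := fun b hb => h b (List.mem_of_mem_dropLast hb)
  have h12 := v12 (A := A) hB
  simp only [sg, List.head?_cons, List.tail_cons, olt_big' h, olt_big' ht]
  have i1 : A.dropLast.isEmpty = false → A.isEmpty = false := by
    cases A <;> simp
  have i2 : olt A.getLast? B.head? = true → A.isEmpty = false := by
    cases A <;> simp [olt_none]
  have i3 : olt A.dropLast.getLast? B.head? = true → A.dropLast.isEmpty = false := by
    cases A.dropLast <;> simp [olt_none]
  revert i1 i2 i3 h12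
  generalize A.isEmpty = u1
  generalize A.dropLast.isEmpty = u2
  generalize olt A.getLast? B.head? = v1
  generalize olt A.getLast? B.tail.head? = v2
  generalize olt A.dropLast.getLast? B.head? = v3
  revert u1 u2 v1 v2 v3
  decide

theorem run_spec (w : List (Fin 3)) :
    w.foldr stp (0, 0) = (sg (cls 0 w) (cls 1 w), sg (cls 1 w) (cls 2 w)) := by
  induction w with
  | nil => decide
  | cons y w ih =>
    rw [List.foldr_cons, ih]
    have hA := sg_consA w.length
    fin_cases y
    · simp [stp, cls, sg_consA _ _ _ (cls_desc 1 w) (cls_lt 1 w)]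
    · simp [stp, cls, sg_consA _ _ _ (cls_desc 2 w) (cls_lt 2 w),
        sg_consB _ _ _ (cls_desc 1 w) (cls_lt 0 w)]
    · simp [stp, cls, sg_consB _ _ _ (cls_desc 2 w) (cls_lt 1 w)]

theorem run_iff (w : List (Fin 3)) : w.foldr stp (0, 0) = (5, 5) ↔
    okk (cls 0 w) (cls 1 w) = true ∧ okk (cls 1 w) (cls 2 w) = true := by
  rw [run_spec, Prod.mk.injEq, sg_five, sg_five]

theorem card_eq (d : ℕ) (hd : 1 ≤ d) :
    Nat.card {l : List ℕ // l.Perm (List.range (d + 3)) ∧ IsMinimal d l} = Gc (d + 3) 0 0 := by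
  classical
  let F : Finset (List (Fin 3)) :=
    ((wds (d + 3)).filter (fun w => decide (w.foldr stp (0, 0) = (5, 5)))).toFinset
  have hF : ∀ w, w ∈ F ↔ w.length = d + 3 ∧
      okk (cls 0 w) (cls 1 w) = true ∧ okk (cls 1 w) (cls 2 w) = true := by
    intro w
    simp only [F, List.mem_toFinset, List.mem_filter, mem_wds, decide_eq_true_eq, run_iff]
  have hc : F.card = Gc (d + 3) 0 0 := by
    rw [← count_wds, List.countP_eq_length_filter]
    exact List.toFinset_card_of_nodup ((nodup_wds _).filter _)
  have hI : ∀ l : List ℕ, (l.Perm (List.range (d + 3)) ∧ IsMinimal d l) ↔ l ∈ F.image toL := by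
    intro l
    rw [Finset.mem_image]
    constructor
    · rintro ⟨hp, hm⟩
      obtain ⟨A, B, C, rfl, hA, hB, hC, h1, h2⟩ := runs_of_minimal d hd l
        (hp.nodup_iff.2 List.nodup_range) (by rw [hp.length_eq, List.length_range]) hm
      obtain ⟨w, hw, rfl, rfl, rfl⟩ := exists_word _ A B C hA hB hC hp
      exact ⟨w, (hF w).2 ⟨hw, h1, h2⟩, rfl⟩
    · rintro ⟨w, hw, rfl⟩
      obtain ⟨hl, h1, h2⟩ := (hF w).1 hw
      have hp := toL_perm w
      rw [hl] at hp
      refine ⟨hp, minimal_of_runs (cls_desc _ _) (cls_desc _ _) (cls_desc _ _) h1 h2 d ?_⟩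
      have := hp.length_eq
      rwa [List.length_range] at this
  rw [Nat.card_congr (Equiv.subtypeEquivRight hI), Nat.card_eq_fintype_card, Fintype.card_coe,
    Finset.card_image_of_injOn, hc]
  intro w hw w' hw' h
  obtain ⟨hl, h1, h2⟩ := (hF w).1 hw
  obtain ⟨hl', h1', h2'⟩ := (hF w').1 hw'
  exact toL_inj w w' (hl.trans hl'.symm) h1 h2 h1' h2' h

/-- The number of minimal permutations with `d` descents of length `d + 3` is
`3^(d+3) - (d²+4d+7) * 2^(d+2) + d⁴/2 + 5d³/2 + 5d² + 6d + 1`. -/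
theorem card_minimal_length_add_three (d : ℕ) (hd : 3 ≤ d) :
    (Nat.card {l : List ℕ // l.Perm (List.range (d + 3)) ∧ IsMinimal d l} : ℚ) =
      3 ^ (d + 3) - ((d : ℚ) ^ 2 + 4 * (d : ℚ) + 7) * 2 ^ (d + 2) +
        (1 / 2) * (d : ℚ) ^ 4 + (5 / 2) * (d : ℚ) ^ 3 + 5 * (d : ℚ) ^ 2 +
        6 * (d : ℚ) + 1 := by
  rw [card_eq d (by omega)]
  have h := Gc_closed d _ rfl
  iterate 30 replace h := h.2
  rw [h]
  ring
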